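/- The set of 48 quaternions consisting of {±1, ±i, ±j, ±k, ½(±1±i±j±k)} together with the 24 quaternions of the form (±1±i)/√2 and all permutations of coordinates with exactly two nonzero entries equal to ±1/√2, is closed under quaternion multiplication and forms a group of order 48 (the binary octahedral group), and as vectors in ℝ⁴ forms the F₄ root system (a root system in the generalized sense). -/

import Mathlib

/-!
Let `x` run over the Lipschitz quaternions `ℍ[ℤ]` whose norm `normSq x` is a power of `2`. Their
directions `x / ‖x‖` are closed under products, conjugation and negation because `normSq` is
multiplicative. If `8 ∣ normSq x` then all coordinates of `x` are even, as squares are `0`, `1` or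
`4` modulo `8`; hence the direction of `x` is already that of a quaternion of norm `4` or `2`, and
these give `binTet` and `octExtra` respectively. The order is therefore `r₄(4) + r₄(2) = 24 + 24`,
where the two parts do not meet because `4 * 2` is not a square. The reflection in a unit
quaternion `p` is `q ↦ -p * star q * p`, so the root system axioms follow from the group axioms.
-/

open Quaternion

/-- The binary tetrahedral group as a set of quaternions. -/
def binTet : Set ℍ[ℝ] :=
  {q | (∃ ε : ℝ, (ε = 1 ∨ ε = -1) ∧
          (q = ⟨ε, 0, 0, 0⟩ ∨ q = ⟨0, ε, 0, 0⟩ ∨ q = ⟨0, 0, ε, 0⟩ ∨ q = ⟨0, 0, 0, ε⟩)) ∨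
       (∃ a b c d : ℝ,
          (a = 1/2 ∨ a = -(1/2)) ∧ (b = 1/2 ∨ b = -(1/2)) ∧
          (c = 1/2 ∨ c = -(1/2)) ∧ (d = 1/2 ∨ d = -(1/2)) ∧ q = ⟨a, b, c, d⟩)}

/-- The quaternion basis `e₁ = 1, e₂ = i, e₃ = j, e₄ = k`. -/
noncomputable def quatBasis : Fin 4 → ℍ[ℝ] := ![1, ⟨0,1,0,0⟩, ⟨0,0,1,0⟩, ⟨0,0,0,1⟩]

/-- The 24 quaternions `(±e_a ± e_b)/√2` for `a < b`. -/
def octExtra : Set ℍ[ℝ] :=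
  {q | ∃ a b : Fin 4, a < b ∧ ∃ ε η : ℝ, (ε = 1 ∨ ε = -1) ∧ (η = 1 ∨ η = -1) ∧
        q = (Real.sqrt 2)⁻¹ • (ε • quatBasis a + η • quatBasis b)}

section QuaternionMap

variable {R S : Type*} [CommRing R] [CommRing S]

/-- The ring homomorphism of quaternions induced by a homomorphism of the coordinate rings. -/
def quaternionMap (f : R →+* S) : ℍ[R] →+* ℍ[S] where
  toFun x := (Quaternion.equivProd S).symm (f x.re, f x.imI, f x.imJ, f x.imK)
  map_one' := by ext <;> simp
  map_mul' x y := by ext <;> simp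
  map_zero' := by ext <;> simp
  map_add' x y := by ext <;> simp

@[simp] theorem re_quaternionMap (f : R →+* S) (x : ℍ[R]) :
    (quaternionMap f x).re = f x.re := rfl

@[simp] theorem imI_quaternionMap (f : R →+* S) (x : ℍ[R]) :
    (quaternionMap f x).imI = f x.imI := rfl

@[simp] theorem imJ_quaternionMap (f : R →+* S) (x : ℍ[R]) :
    (quaternionMap f x).imJ = f x.imJ := rfl

@[simp] theorem imK_quaternionMap (f : R →+* S) (x : ℍ[R]) :
    (quaternionMap f x).imK = f x.imK := rfl

@[simp] theorem quaternionMap_mk (f : R →+* S) (a b c d : R) :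
    quaternionMap f ⟨a, b, c, d⟩ = ⟨f a, f b, f c, f d⟩ := rfl

theorem quaternionMap_injective {f : R →+* S} (hf : Function.Injective f) :
    Function.Injective (quaternionMap f) := fun x y h => by
  simpa only [Quaternion.ext_iff, re_quaternionMap, imI_quaternionMap, imJ_quaternionMap,
    imK_quaternionMap, hf.eq_iff] using h

theorem quaternionMap_star (f : R →+* S) (x : ℍ[R]) :
    quaternionMap f (star x) = star (quaternionMap f x) := by
  ext <;> simp

theorem normSq_quaternionMap (f : R →+* S) (x : ℍ[R]) :
    normSq (quaternionMap f x) = f (normSq x) := by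
  simp [normSq_def']

end QuaternionMap

theorem mul_star_mul_eq_smul_sub {R : Type*} [CommRing R] (p q : ℍ[R]) :
    p * star q * p = (2 * (p * star q).re) • p - normSq p • q := by
  have trace : p * star q + q * star p = ((2 * (p * star q).re : R) : ℍ[R]) := by
    simpa using self_add_star' (p * star q)
  calc p * star q * p = (p * star q + q * star p) * p - q * (star p * p) := by noncomm_ring
    _ = (2 * (p * star q).re) • p - normSq p • q := by
      rw [trace, star_mul_self, coe_mul_eq_smul, mul_coe_eq_smul]

theorem sub_smul_eq_neg_mul_star_mul {K : Type*} [Field K] {p : ℍ[K]} (hp : normSq p = 1)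
    (q : ℍ[K]) :
    q - (2 * (p * star q).re / (p * star p).re) • p = -(p * star q * p) := by
  rw [mul_star_mul_eq_smul_sub, ← normSq_def, hp, div_one, one_smul, neg_sub]

theorem normalize_mul_eq_mul_normalize {A : Type*} [NormedRing A] [NormMulClass A]
    [NormedAlgebra ℝ A] (a b : A) :
    NormedSpace.normalize (a * b) = NormedSpace.normalize a * NormedSpace.normalize b := by
  simp only [NormedSpace.normalize, norm_mul, mul_inv, smul_mul_smul_comm]

/-- The unit vector `x / ‖x‖` in the direction of a Lipschitz (that is, integral) quaternion `x`;
the direction of `0` is `0`. -/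
noncomputable def lipschitzDirection : ℍ[ℤ] →* ℍ[ℝ] where
  toFun x := NormedSpace.normalize (quaternionMap (Int.castRingHom ℝ) x)
  map_one' := by
    rw [map_one, NormedSpace.normalize_eq_self_of_norm_eq_one norm_one]
  map_mul' x y := by
    rw [map_mul, normalize_mul_eq_mul_normalize]

theorem lipschitzDirection_smul_of_pos {k : ℤ} (hk : 0 < k) (x : ℍ[ℤ]) :
    lipschitzDirection (k • x) = lipschitzDirection x := by
  have hk' : (0 : ℝ) < k := by exact_mod_cast hk
  simpa only [lipschitzDirection, MonoidHom.coe_mk, OneHom.coe_mk, map_zsmul,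
    Int.cast_smul_eq_zsmul] using
    NormedSpace.normalize_smul_of_pos hk' (quaternionMap (Int.castRingHom ℝ) x)

theorem norm_quaternionMap_intCast (x : ℍ[ℤ]) :
    ‖quaternionMap (Int.castRingHom ℝ) x‖ = √((normSq x : ℤ) : ℝ) := by
  rw [← Real.sqrt_mul_self (norm_nonneg _), ← normSq_eq_norm_mul_self, normSq_quaternionMap,
    eq_intCast]

theorem lipschitzDirection_apply (x : ℍ[ℤ]) :
    lipschitzDirection x =
      (√((normSq x : ℤ) : ℝ))⁻¹ • quaternionMap (Int.castRingHom ℝ) x := by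
  rw [← norm_quaternionMap_intCast]
  rfl

theorem sqrt_normSq_smul_lipschitzDirection (x : ℍ[ℤ]) :
    √((normSq x : ℤ) : ℝ) • lipschitzDirection x = quaternionMap (Int.castRingHom ℝ) x := by
  rw [← norm_quaternionMap_intCast]
  exact NormedSpace.norm_smul_normalize _

theorem lipschitzDirection_neg (x : ℍ[ℤ]) :
    lipschitzDirection (-x) = -lipschitzDirection x := by
  simp only [lipschitzDirection_apply, normSq_neg, map_neg, smul_neg]

theorem lipschitzDirection_star (x : ℍ[ℤ]) :
    lipschitzDirection (star x) = star (lipschitzDirection x) := by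
  simp only [lipschitzDirection_apply, normSq_star, quaternionMap_star, Quaternion.star_smul]

theorem normSq_lipschitzDirection {x : ℍ[ℤ]} (hx : x ≠ 0) :
    normSq (lipschitzDirection x) = 1 := by
  have hx' : quaternionMap (Int.castRingHom ℝ) x ≠ 0 :=
    (map_ne_zero_iff _ (quaternionMap_injective Int.cast_injective)).2 hx
  rw [normSq_eq_norm_mul_self, lipschitzDirection, MonoidHom.coe_mk, OneHom.coe_mk,
    NormedSpace.norm_normalize hx', mul_one]

theorem injOn_lipschitzDirection (n : ℤ) :
    Set.InjOn lipschitzDirection {x | normSq x = n} := by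
  intro x hx y hy h
  apply quaternionMap_injective (f := Int.castRingHom ℝ) Int.cast_injective
  rw [← sqrt_normSq_smul_lipschitzDirection x, ← sqrt_normSq_smul_lipschitzDirection y, h,
    Set.mem_ofPred.1 hx, Set.mem_ofPred.1 hy]

-- Equality in Cauchy–Schwarz: the inner product `(x * star y).re` is an integral square root.
theorem isSquare_normSq_mul_of_lipschitzDirection_eq {x y : ℍ[ℤ]}
    (h : lipschitzDirection x = lipschitzDirection y) : IsSquare (normSq x * normSq y) := by
  let f := quaternionMap (Int.castRingHom ℝ)
  have proportional : ‖f y‖ • f x = ‖f x‖ • f y := by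
    simp only [f]
    rw [norm_quaternionMap_intCast, norm_quaternionMap_intCast,
      ← sqrt_normSq_smul_lipschitzDirection x, ← sqrt_normSq_smul_lipschitzDirection y, h,
      smul_comm]
  have inner_eq : (((x * star y).re : ℤ) : ℝ) = ‖f x‖ * ‖f y‖ := by
    rw [← inner_eq_norm_mul_iff_real.2 proportional, Quaternion.inner_def,
      ← quaternionMap_star, ← map_mul, re_quaternionMap, eq_intCast]
  refine ⟨(x * star y).re, ?_⟩
  have cast_eq : ((normSq x * normSq y : ℤ) : ℝ) = ((x * star y).re * (x * star y).re : ℤ) := by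
    push_cast
    rw [inner_eq, mul_mul_mul_comm, ← normSq_eq_norm_mul_self, ← normSq_eq_norm_mul_self,
      normSq_quaternionMap, normSq_quaternionMap, eq_intCast, eq_intCast]
  exact_mod_cast cast_eq

theorem two_dvd_and_sq_emod_eight_or_sq_emod_eight_eq_one (n : ℤ) :
    (2 ∣ n ∧ (n ^ 2 % 8 = 0 ∨ n ^ 2 % 8 = 4)) ∨ n ^ 2 % 8 = 1 := by
  rcases Int.even_or_odd n with ⟨m, rfl⟩ | hn
  · rcases Int.even_or_odd m with ⟨k, rfl⟩ | ⟨k, rfl⟩ <;> ring_nf <;> omega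
  · have := Int.eight_dvd_sq_sub_one_of_odd hn
    omega

theorem exists_eq_two_smul_of_eight_dvd_normSq {x : ℍ[ℤ]} (h : 8 ∣ normSq x) :
    ∃ y : ℍ[ℤ], x = (2 : ℤ) • y := by
  rw [normSq_def'] at h
  have h₁ := two_dvd_and_sq_emod_eight_or_sq_emod_eight_eq_one x.re
  have h₂ := two_dvd_and_sq_emod_eight_or_sq_emod_eight_eq_one x.imI
  have h₃ := two_dvd_and_sq_emod_eight_or_sq_emod_eight_eq_one x.imJ
  have h₄ := two_dvd_and_sq_emod_eight_or_sq_emod_eight_eq_one x.imK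
  obtain ⟨⟨a, ha⟩, ⟨b, hb⟩, ⟨c, hc⟩, ⟨d, hd⟩⟩ :
      2 ∣ x.re ∧ 2 ∣ x.imI ∧ 2 ∣ x.imJ ∧ 2 ∣ x.imK := by omega
  exact ⟨⟨a, b, c, d⟩, QuaternionAlgebra.ext ha hb hc hd⟩

/-- The directions of the Lipschitz quaternions whose norm `normSq x` is a power of `2`. -/
noncomputable def dyadicDirections : Submonoid ℍ[ℝ] :=
  ((Submonoid.powers (2 : ℤ)).comap normSq).map lipschitzDirection

theorem neg_mem_dyadicDirections {q : ℍ[ℝ]} (hq : q ∈ dyadicDirections) :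
    -q ∈ dyadicDirections := by
  obtain ⟨x, ⟨n, hn⟩, rfl⟩ := hq
  exact ⟨-x, ⟨n, by rw [normSq_neg, ← hn]⟩, lipschitzDirection_neg x⟩

theorem star_mem_dyadicDirections {q : ℍ[ℝ]} (hq : q ∈ dyadicDirections) :
    star q ∈ dyadicDirections := by
  obtain ⟨x, ⟨n, hn⟩, rfl⟩ := hq
  exact ⟨star x, ⟨n, by rw [normSq_star, ← hn]⟩, lipschitzDirection_star x⟩

theorem normSq_eq_one_of_mem_dyadicDirections {q : ℍ[ℝ]} (hq : q ∈ dyadicDirections) :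
    normSq q = 1 := by
  obtain ⟨x, ⟨n, hn⟩, rfl⟩ := hq
  apply normSq_lipschitzDirection
  rintro rfl
  simp at hn

theorem inv_mem_dyadicDirections {q : ℍ[ℝ]} (hq : q ∈ dyadicDirections) :
    q⁻¹ ∈ dyadicDirections := by
  rw [Quaternion.inv_def, normSq_eq_one_of_mem_dyadicDirections hq, inv_one, one_smul]
  exact star_mem_dyadicDirections hq

theorem reflection_mem_dyadicDirections {p q : ℍ[ℝ]} (hp : p ∈ dyadicDirections)
    (hq : q ∈ dyadicDirections) :
    q - (2 * (p * star q).re / (p * star p).re) • p ∈ dyadicDirections := by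
  rw [sub_smul_eq_neg_mul_star_mul (normSq_eq_one_of_mem_dyadicDirections hp)]
  exact neg_mem_dyadicDirections (mul_mem (mul_mem hp (star_mem_dyadicDirections hq)) hp)

theorem eq_one_or_neg_one_of_smul_mem_dyadicDirections {q : ℍ[ℝ]} {t : ℝ}
    (hq : q ∈ dyadicDirections) (htq : t • q ∈ dyadicDirections) : t = 1 ∨ t = -1 := by
  have ht := normSq_eq_one_of_mem_dyadicDirections htq
  rw [normSq_smul, normSq_eq_one_of_mem_dyadicDirections hq, mul_one] at ht
  exact sq_eq_one_iff.1 ht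

theorem exists_normSq_eq_four_or_two {x : ℍ[ℤ]} {n : ℕ} (hx : normSq x = 2 ^ n) :
    ∃ y : ℍ[ℤ], (normSq y = 4 ∨ normSq y = 2) ∧ lipschitzDirection y = lipschitzDirection x := by
  induction n using Nat.strong_induction_on generalizing x with
  | _ n ih =>
    match n with
    | 0 =>
      refine ⟨(2 : ℤ) • x, .inl ?_, lipschitzDirection_smul_of_pos two_pos x⟩
      rw [normSq_smul, hx]
      norm_num
    | 1 => exact ⟨x, .inr hx, rfl⟩
    | 2 => exact ⟨x, .inl hx, rfl⟩
    | n + 3 =>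
      have eight_dvd : 8 ∣ normSq x := ⟨2 ^ n, by rw [hx]; ring⟩
      obtain ⟨y, rfl⟩ := exists_eq_two_smul_of_eight_dvd_normSq eight_dvd
      have hy : normSq y = 2 ^ (n + 1) := by
        rw [normSq_smul] at hx
        linarith [pow_succ (2 : ℤ) (n + 2), pow_succ (2 : ℤ) (n + 1)]
      rw [lipschitzDirection_smul_of_pos two_pos]
      exact ih (n + 1) (by omega) hy

theorem coe_dyadicDirections :
    (dyadicDirections : Set ℍ[ℝ]) =
      lipschitzDirection '' {x | normSq x = 4} ∪ lipschitzDirection '' {x | normSq x = 2} := by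
  ext q
  constructor
  · rintro ⟨x, ⟨n, hn⟩, rfl⟩
    obtain ⟨y, hy | hy, hyx⟩ := exists_normSq_eq_four_or_two hn.symm
    · exact .inl ⟨y, hy, hyx⟩
    · exact .inr ⟨y, hy, hyx⟩
  · rintro (⟨x, hx, rfl⟩ | ⟨x, hx, rfl⟩)
    · exact ⟨x, ⟨2, hx.symm⟩, rfl⟩
    · exact ⟨x, ⟨1, hx.symm⟩, rfl⟩

theorem eq_one_or_neg_one_iff_exists_intCast {R : Type*} [Ring R] {ε : R} :
    ε = 1 ∨ ε = -1 ↔ ∃ e : ℤ, e ^ 2 = 1 ∧ ε = e := by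
  simp only [sq_eq_one_iff, or_and_right, exists_or, exists_eq_left, Int.cast_one,
    Int.cast_neg]

theorem eq_half_or_neg_half_iff_exists_intCast {K : Type*} [DivisionRing K] {a : K} :
    a = 1 / 2 ∨ a = -(1 / 2) ↔ ∃ m : ℤ, m ^ 2 = 1 ∧ a = m / 2 := by
  simp only [sq_eq_one_iff, or_and_right, exists_or, exists_eq_left, Int.cast_one,
    Int.cast_neg, neg_div]

/-- The basis `1, i, j, k` of the Lipschitz quaternions, indexed as `quatBasis`. -/
def lipschitzBasis : Fin 4 → ℍ[ℤ] := ![1, ⟨0, 1, 0, 0⟩, ⟨0, 0, 1, 0⟩, ⟨0, 0, 0, 1⟩]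

theorem quaternionMap_lipschitzBasis (a : Fin 4) :
    quaternionMap (Int.castRingHom ℝ) (lipschitzBasis a) = quatBasis a := by
  fin_cases a <;> ext <;> simp [lipschitzBasis, quatBasis]

theorem normSq_lipschitzBasis (a : Fin 4) : normSq (lipschitzBasis a) = 1 := by
  decide +revert

theorem eq_sum_smul_lipschitzBasis (x : ℍ[ℤ]) :
    x = x.re • lipschitzBasis 0 + x.imI • lipschitzBasis 1 + x.imJ • lipschitzBasis 2 +
      x.imK • lipschitzBasis 3 := by
  ext <;> simp only [re_add, imI_add, imJ_add, imK_add, re_smul, imI_smul, imJ_smul, imK_smul] <;>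
    simp [lipschitzBasis]

theorem smul_quatBasis (ε : ℝ) (a : Fin 4) :
    ε • quatBasis a = ![⟨ε, 0, 0, 0⟩, ⟨0, ε, 0, 0⟩, ⟨0, 0, ε, 0⟩, ⟨0, 0, 0, ε⟩] a := by
  fin_cases a <;> ext <;> simp only [re_smul, imI_smul, imJ_smul, imK_smul] <;> simp [quatBasis]

theorem exists_eq_smul_quatBasis_iff {q : ℍ[ℝ]} {ε : ℝ} :
    (∃ a, q = ε • quatBasis a) ↔
      q = ⟨ε, 0, 0, 0⟩ ∨ q = ⟨0, ε, 0, 0⟩ ∨ q = ⟨0, 0, ε, 0⟩ ∨ q = ⟨0, 0, 0, ε⟩ := by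
  simp [smul_quatBasis, Fin.exists_fin_succ]

theorem eq_zero_or_sq_eq_one_of_sq_lt_four {n : ℤ} (hn : n ^ 2 < 4) : n = 0 ∨ n ^ 2 = 1 := by
  obtain ⟨lower, upper⟩ : -2 < n ∧ n < 2 := abs_lt_of_sq_lt_sq' (by omega) zero_le_two
  interval_cases n <;> norm_num

theorem eq_zero_or_sq_eq_one_or_eq_two_mul {n : ℤ} (hn : n ^ 2 ≤ 4) :
    n = 0 ∨ n ^ 2 = 1 ∨ ∃ e : ℤ, e ^ 2 = 1 ∧ n = 2 * e := by
  rcases hn.lt_or_eq with hn | hn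
  · exact (eq_zero_or_sq_eq_one_of_sq_lt_four hn).imp_right .inl
  · rcases sq_eq_sq_iff_eq_or_eq_neg.1 (hn.trans (by norm_num : (4 : ℤ) = 2 ^ 2)) with rfl | rfl
    · exact .inr (.inr ⟨1, by norm_num⟩)
    · exact .inr (.inr ⟨-1, by norm_num⟩)

theorem normSq_eq_four_iff {x : ℍ[ℤ]} :
    normSq x = 4 ↔ (∃ (e : ℤ) (a : Fin 4), e ^ 2 = 1 ∧ x = (2 * e) • lipschitzBasis a) ∨
      (x.re ^ 2 = 1 ∧ x.imI ^ 2 = 1 ∧ x.imJ ^ 2 = 1 ∧ x.imK ^ 2 = 1) := by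
  constructor
  · intro h
    have expansion := eq_sum_smul_lipschitzBasis x
    rw [normSq_def'] at h
    have h₁ := eq_zero_or_sq_eq_one_or_eq_two_mul (n := x.re) (by nlinarith)
    have h₂ := eq_zero_or_sq_eq_one_or_eq_two_mul (n := x.imI) (by nlinarith)
    have h₃ := eq_zero_or_sq_eq_one_or_eq_two_mul (n := x.imJ) (by nlinarith)
    have h₄ := eq_zero_or_sq_eq_one_or_eq_two_mul (n := x.imK) (by nlinarith)
    obtain ⟨e, he, h₁, h₂, h₃, h₄⟩ | ⟨e, he, h₁, h₂, h₃, h₄⟩ | ⟨e, he, h₁, h₂, h₃, h₄⟩ |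
        ⟨e, he, h₁, h₂, h₃, h₄⟩ | units :
        (∃ e, e ^ 2 = 1 ∧ x.re = 2 * e ∧ x.imI = 0 ∧ x.imJ = 0 ∧ x.imK = 0) ∨
        (∃ e, e ^ 2 = 1 ∧ x.re = 0 ∧ x.imI = 2 * e ∧ x.imJ = 0 ∧ x.imK = 0) ∨
        (∃ e, e ^ 2 = 1 ∧ x.re = 0 ∧ x.imI = 0 ∧ x.imJ = 2 * e ∧ x.imK = 0) ∨
        (∃ e, e ^ 2 = 1 ∧ x.re = 0 ∧ x.imI = 0 ∧ x.imJ = 0 ∧ x.imK = 2 * e) ∨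
        (x.re ^ 2 = 1 ∧ x.imI ^ 2 = 1 ∧ x.imJ ^ 2 = 1 ∧ x.imK ^ 2 = 1) := by
      grind
    · exact .inl ⟨e, 0, he, expansion.trans (by simp [h₁, h₂, h₃, h₄, mul_assoc])⟩
    · exact .inl ⟨e, 1, he, expansion.trans (by simp [h₁, h₂, h₃, h₄, mul_assoc])⟩
    · exact .inl ⟨e, 2, he, expansion.trans (by simp [h₁, h₂, h₃, h₄, mul_assoc])⟩
    · exact .inl ⟨e, 3, he, expansion.trans (by simp [h₁, h₂, h₃, h₄, mul_assoc])⟩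
    · exact .inr units
  · rintro (⟨e, a, he, rfl⟩ | ⟨h₁, h₂, h₃, h₄⟩)
    · rw [normSq_smul, mul_pow, normSq_lipschitzBasis, he]
      norm_num
    · rw [normSq_def', h₁, h₂, h₃, h₄]
      norm_num

theorem lipschitzDirection_smul_lipschitzBasis {e : ℤ} (he : e ^ 2 = 1) (a : Fin 4) :
    lipschitzDirection ((2 * e) • lipschitzBasis a) = (e : ℝ) • quatBasis a := by
  have hx : normSq (e • lipschitzBasis a) = 1 := by
    rw [normSq_smul, normSq_lipschitzBasis, he, one_mul]
  rw [mul_smul, lipschitzDirection_smul_of_pos two_pos, lipschitzDirection_apply, hx, Int.cast_one,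
    Real.sqrt_one, inv_one, one_smul, map_zsmul, quaternionMap_lipschitzBasis,
    Int.cast_smul_eq_zsmul]

theorem lipschitzDirection_of_normSq_eq_four {x : ℍ[ℤ]} (hx : normSq x = 4) :
    lipschitzDirection x = ⟨x.re / 2, x.imI / 2, x.imJ / 2, x.imK / 2⟩ := by
  have sqrt_four : √(4 : ℝ) = 2 := by rw [Real.sqrt_eq_iff_mul_self_eq] <;> norm_num
  rw [lipschitzDirection_apply, hx, Int.cast_ofNat, sqrt_four]
  ext <;> simp [div_eq_inv_mul]

theorem binTet_eq_image : binTet = lipschitzDirection '' {x | normSq x = 4} := by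
  ext q
  constructor
  · rintro (⟨ε, hε, hq⟩ | ⟨a, b, c, d, ha, hb, hc, hd, rfl⟩)
    · obtain ⟨e, he, rfl⟩ := eq_one_or_neg_one_iff_exists_intCast.1 hε
      obtain ⟨a, rfl⟩ := exists_eq_smul_quatBasis_iff.2 hq
      exact ⟨_, normSq_eq_four_iff.2 (.inl ⟨e, a, he, rfl⟩),
        lipschitzDirection_smul_lipschitzBasis he a⟩
    · obtain ⟨k, hk, rfl⟩ := eq_half_or_neg_half_iff_exists_intCast.1 ha
      obtain ⟨l, hl, rfl⟩ := eq_half_or_neg_half_iff_exists_intCast.1 hb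
      obtain ⟨m, hm, rfl⟩ := eq_half_or_neg_half_iff_exists_intCast.1 hc
      obtain ⟨n, hn, rfl⟩ := eq_half_or_neg_half_iff_exists_intCast.1 hd
      have hx : normSq (⟨k, l, m, n⟩ : ℍ[ℤ]) = 4 := normSq_eq_four_iff.2 (.inr ⟨hk, hl, hm, hn⟩)
      exact ⟨_, hx, lipschitzDirection_of_normSq_eq_four hx⟩
  · rintro ⟨x, hx, rfl⟩
    rcases normSq_eq_four_iff.1 hx with ⟨e, a, he, rfl⟩ | ⟨h₁, h₂, h₃, h₄⟩
    · exact .inl ⟨e, eq_one_or_neg_one_iff_exists_intCast.2 ⟨e, he, rfl⟩,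
        exists_eq_smul_quatBasis_iff.1 ⟨a, lipschitzDirection_smul_lipschitzBasis he a⟩⟩
    · exact .inr ⟨_, _, _, _, eq_half_or_neg_half_iff_exists_intCast.2 ⟨_, h₁, rfl⟩,
        eq_half_or_neg_half_iff_exists_intCast.2 ⟨_, h₂, rfl⟩,
        eq_half_or_neg_half_iff_exists_intCast.2 ⟨_, h₃, rfl⟩,
        eq_half_or_neg_half_iff_exists_intCast.2 ⟨_, h₄, rfl⟩,
        lipschitzDirection_of_normSq_eq_four hx⟩

theorem normSq_eq_two_iff {x : ℍ[ℤ]} :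
    normSq x = 2 ↔ ∃ a b : Fin 4, a < b ∧ ∃ e n : ℤ, e ^ 2 = 1 ∧ n ^ 2 = 1 ∧
      e • lipschitzBasis a + n • lipschitzBasis b = x := by
  constructor
  · intro h
    have expansion := eq_sum_smul_lipschitzBasis x
    rw [normSq_def'] at h
    have h₁ := eq_zero_or_sq_eq_one_of_sq_lt_four (n := x.re) (by nlinarith)
    have h₂ := eq_zero_or_sq_eq_one_of_sq_lt_four (n := x.imI) (by nlinarith)
    have h₃ := eq_zero_or_sq_eq_one_of_sq_lt_four (n := x.imJ) (by nlinarith)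
    have h₄ := eq_zero_or_sq_eq_one_of_sq_lt_four (n := x.imK) (by nlinarith)
    obtain ⟨h₁, h₂, h₃, h₄⟩ | ⟨h₁, h₂, h₃, h₄⟩ | ⟨h₁, h₂, h₃, h₄⟩ | ⟨h₁, h₂, h₃, h₄⟩ |
        ⟨h₁, h₂, h₃, h₄⟩ | ⟨h₁, h₂, h₃, h₄⟩ :
        (x.re ^ 2 = 1 ∧ x.imI ^ 2 = 1 ∧ x.imJ = 0 ∧ x.imK = 0) ∨
        (x.re ^ 2 = 1 ∧ x.imI = 0 ∧ x.imJ ^ 2 = 1 ∧ x.imK = 0) ∨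
        (x.re ^ 2 = 1 ∧ x.imI = 0 ∧ x.imJ = 0 ∧ x.imK ^ 2 = 1) ∨
        (x.re = 0 ∧ x.imI ^ 2 = 1 ∧ x.imJ ^ 2 = 1 ∧ x.imK = 0) ∨
        (x.re = 0 ∧ x.imI ^ 2 = 1 ∧ x.imJ = 0 ∧ x.imK ^ 2 = 1) ∨
        (x.re = 0 ∧ x.imI = 0 ∧ x.imJ ^ 2 = 1 ∧ x.imK ^ 2 = 1) := by
      grind
    · exact ⟨0, 1, by decide, _, _, h₁, h₂, by simpa [h₃, h₄] using expansion.symm⟩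
    · exact ⟨0, 2, by decide, _, _, h₁, h₃, by simpa [h₂, h₄] using expansion.symm⟩
    · exact ⟨0, 3, by decide, _, _, h₁, h₄, by simpa [h₂, h₃] using expansion.symm⟩
    · exact ⟨1, 2, by decide, _, _, h₂, h₃, by simpa [h₁, h₄] using expansion.symm⟩
    · exact ⟨1, 3, by decide, _, _, h₂, h₄, by simpa [h₁, h₃] using expansion.symm⟩
    · exact ⟨2, 3, by decide, _, _, h₃, h₄, by simpa [h₁, h₂] using expansion.symm⟩
  · rintro ⟨a, b, hab, e, n, he, hn, rfl⟩
    have orthogonal : ∀ a b, a < b → (lipschitzBasis a * star (lipschitzBasis b)).re = 0 := by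
      decide
    rw [normSq_add, normSq_smul, normSq_smul, he, hn, normSq_lipschitzBasis,
      normSq_lipschitzBasis, Quaternion.star_smul, smul_mul_smul_comm, re_smul,
      orthogonal a b hab]
    norm_num

theorem lipschitzDirection_of_normSq_eq_two {a b : Fin 4} {e n : ℤ}
    (h : normSq (e • lipschitzBasis a + n • lipschitzBasis b) = 2) :
    lipschitzDirection (e • lipschitzBasis a + n • lipschitzBasis b) =
      (√2)⁻¹ • ((e : ℝ) • quatBasis a + (n : ℝ) • quatBasis b) := by
  simp only [lipschitzDirection_apply, h, Int.cast_ofNat, map_add, map_zsmul,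
    quaternionMap_lipschitzBasis, Int.cast_smul_eq_zsmul]

theorem octExtra_eq_image : octExtra = lipschitzDirection '' {x | normSq x = 2} := by
  ext q
  constructor
  · rintro ⟨a, b, hab, ε, η, hε, hη, rfl⟩
    obtain ⟨e, he, rfl⟩ := eq_one_or_neg_one_iff_exists_intCast.1 hε
    obtain ⟨n, hn, rfl⟩ := eq_one_or_neg_one_iff_exists_intCast.1 hη
    have hx := normSq_eq_two_iff.2 ⟨a, b, hab, e, n, he, hn, rfl⟩
    exact ⟨_, hx, lipschitzDirection_of_normSq_eq_two hx⟩
  · rintro ⟨x, hx, rfl⟩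
    obtain ⟨a, b, hab, e, n, he, hn, rfl⟩ := normSq_eq_two_iff.1 hx
    exact ⟨a, b, hab, e, n, eq_one_or_neg_one_iff_exists_intCast.2 ⟨e, he, rfl⟩,
      eq_one_or_neg_one_iff_exists_intCast.2 ⟨n, hn, rfl⟩, lipschitzDirection_of_normSq_eq_two hx⟩

theorem ncard_normSq_eq {n : ℤ} (b : ℕ) (hb : n < (b + 1) ^ 2) :
    {x : ℍ[ℤ] | normSq x = n}.ncard =
      (((Finset.Icc (-b : ℤ) b) ×ˢ (Finset.Icc (-b : ℤ) b) ×ˢ (Finset.Icc (-b : ℤ) b) ×ˢ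
        (Finset.Icc (-b : ℤ) b)).filter
          fun v => v.1 ^ 2 + v.2.1 ^ 2 + v.2.2.1 ^ 2 + v.2.2.2 ^ 2 = n).card := by
  have mem_Icc_of_sq_le {a : ℤ} (ha : a ^ 2 ≤ n) : -(b : ℤ) ≤ a ∧ a ≤ b := by
    have := abs_lt_of_sq_lt_sq' (ha.trans_lt hb) (by positivity)
    omega
  rw [← Set.ncard_coe_finset, ← Set.ncard_image_of_injective _ (Quaternion.equivProd ℤ).injective]
  congr 1
  ext ⟨k, l, m, r⟩
  simp only [Finset.coe_filter, Finset.mem_product, Finset.mem_Icc, Set.mem_image, Set.mem_ofPred,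
    ← Equiv.eq_symm_apply, exists_eq_right]
  have normSq_eq : normSq ((Quaternion.equivProd ℤ).symm (k, l, m, r)) =
      k ^ 2 + l ^ 2 + m ^ 2 + r ^ 2 := normSq_def' _
  rw [normSq_eq]
  constructor
  · intro h
    exact ⟨⟨mem_Icc_of_sq_le (by nlinarith), mem_Icc_of_sq_le (by nlinarith),
      mem_Icc_of_sq_le (by nlinarith), mem_Icc_of_sq_le (by nlinarith)⟩, h⟩
  · exact fun h => h.2

theorem ncard_normSq_eq_four : {x : ℍ[ℤ] | normSq x = 4}.ncard = 24 := by
  rw [ncard_normSq_eq 2 (by norm_num)]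
  decide +kernel

theorem ncard_normSq_eq_two : {x : ℍ[ℤ] | normSq x = 2}.ncard = 24 := by
  rw [ncard_normSq_eq 1 (by norm_num)]
  decide +kernel

theorem disjoint_binTet_octExtra : Disjoint binTet octExtra := by
  rw [binTet_eq_image, octExtra_eq_image, Set.disjoint_left]
  rintro _ ⟨x, hx, rfl⟩ ⟨y, hy, hyx⟩
  have square := isSquare_normSq_mul_of_lipschitzDirection_eq hyx
  rw [Set.mem_ofPred.1 hx, Set.mem_ofPred.1 hy] at square
  exact absurd square (by decide +kernel)

theorem ncard_binTet : binTet.ncard = 24 := by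
  rw [binTet_eq_image, (injOn_lipschitzDirection 4).ncard_image, ncard_normSq_eq_four]

theorem ncard_octExtra : octExtra.ncard = 24 := by
  rw [octExtra_eq_image, (injOn_lipschitzDirection 2).ncard_image, ncard_normSq_eq_two]

theorem ncard_binTet_union_octExtra : (binTet ∪ octExtra).ncard = 48 := by
  have finite_binTet : binTet.Finite := Set.finite_of_ncard_ne_zero (by simp [ncard_binTet])
  have finite_octExtra : octExtra.Finite := Set.finite_of_ncard_ne_zero (by simp [ncard_octExtra])
  rw [Set.ncard_union_eq disjoint_binTet_octExtra finite_binTet finite_octExtra, ncard_binTet,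
    ncard_octExtra]

theorem binTet_union_octExtra_eq : binTet ∪ octExtra = dyadicDirections := by
  rw [binTet_eq_image, octExtra_eq_image, coe_dyadicDirections]

/-- The binary octahedral group `2O = 2T ∪ {(±e_a±e_b)/√2}` is closed under quaternion
multiplication, is a group of order 48, and as a set of vectors in ℝ⁴ forms the `F₄`
root system in the generalized sense. -/
theorem binaryOctahedral_group_and_F4_root_system :
    (∀ p ∈ binTet ∪ octExtra, ∀ q ∈ binTet ∪ octExtra, p * q ∈ binTet ∪ octExtra) ∧
    (1 : ℍ[ℝ]) ∈ binTet ∪ octExtra ∧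
    (∀ p ∈ binTet ∪ octExtra, p⁻¹ ∈ binTet ∪ octExtra) ∧
    (binTet ∪ octExtra).ncard = 48 ∧
    (∀ q ∈ binTet ∪ octExtra, -q ∈ binTet ∪ octExtra) ∧
    (∀ q ∈ binTet ∪ octExtra, ∀ t : ℝ, t • q ∈ binTet ∪ octExtra → t = 1 ∨ t = -1) ∧
    (∀ p ∈ binTet ∪ octExtra, ∀ q ∈ binTet ∪ octExtra,
      q - (2 * (p * star q).re / (p * star p).re) • p ∈ binTet ∪ octExtra) := by
  rw [ncard_binTet_union_octExtra, binTet_union_octExtra_eq]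
  exact ⟨fun _ hp _ hq => mul_mem hp hq, one_mem _, fun _ hp => inv_mem_dyadicDirections hp, rfl,
    fun _ hq => neg_mem_dyadicDirections hq,
    fun _ hq _ htq => eq_one_or_neg_one_of_smul_mem_dyadicDirections hq htq,
    fun _ hp _ hq => reflection_mem_dyadicDirections hp hq⟩
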